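/- arXiv:2106.01281 — 2 statements merged into one kernel-verified Lean document; each statement's English description precedes it below -/
import Mathlib

section
/- (i) For every law-invariant functional φ : X → [−∞, ∞] and every nonconstant D ∈ X* with E[D] > 0, there exist a law-invariant set C ⊂ X and p ∈ ℝ such that (φ, C, D, p) is a feasible quadruple and no optimal solution is antimonotone with D. (ii) If, in addition, φ(X₀) ∈ ℝ for some nonconstant X₀ ∈ X, then C and p can be chosen so that moreover Max(φ, C, D, p) ∈ ℝ and there exists an optimal solution that is not antimonotone with D. -/
/-!
Fix a nonconstant `X₀` and let `C` be its law class. A law-invariant `φ` is constant on `C`, so every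
`X ∈ C` with `E[D X] = p` is optimal, with value `φ X₀`. It remains to choose a price `p` that is
attained on `C` but by no `X ∈ C` antimonotone with `D`.

Antimonotonicity prescribes the joint distribution function of `(X, D)` in terms of the marginals,
hence all antimonotone `X ∈ C` share one price (`Antimonotone.integral_eq`). On the other hand two
elements of `C` have different prices (`exists_integral_ne`): take thresholds `c`, `d` for `X₀` and
`D`, events `A ⊆ {D ≤ d}` and `B ⊆ {D > d}` of equal probability, and `X₁, X₂ ∈ C` that agree off
`A ∪ B`, with `X₁ ≤ c < X₂` on `A` and `X₂ ≤ c < X₁` on `B`. Then `(D - d) (X₁ - X₂)` is nonnegative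
and is positive on `B`, while `E[X₁] = E[X₂]`, so `E[D X₁] > E[D X₂]`. At least one of these two
prices differs from the antimonotone one.

The variables `X₁, X₂` exist because an atomless space carries a variable of every law
(`IsAtomless.exists_map_eq`), which follows from the existence of a chain of events along which the
measure takes all intermediate values (`IsAtomless.exists_chain`).
-/

open MeasureTheory Set List
open scoped ENNReal NNReal

noncomputable section

namespace Collapse

variable {Ω : Type*} [MeasurableSpace Ω]

/-- A measure is atomless (nonatomic) if every set of positive measure contains a
measurable subset of strictly smaller positive measure. -/
def IsAtomless (P : Measure Ω) : Prop :=
  ∀ A : Set Ω, MeasurableSet A → 0 < P A →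
    ∃ B : Set Ω, MeasurableSet B ∧ B ⊆ A ∧ 0 < P B ∧ P B < P A

/-- `X` and `Y` have the same law under `P`. -/
def SameLaw (P : Measure Ω) (X Y : Ω → ℝ) : Prop :=
  Measure.map X P = Measure.map Y P

/-- `X` is not `P`-a.s. equal to a constant. -/
def Nonconstant (P : Measure Ω) (X : Ω → ℝ) : Prop :=
  ∀ c : ℝ, ¬ X =ᵐ[P] (fun _ => c)

/-- `X` and `Y` are comonotone:
`P(X ≤ x, Y ≤ y) = min (P(X ≤ x)) (P(Y ≤ y))` for all `x y`. -/
def Comonotone (P : Measure Ω) (X Y : Ω → ℝ) : Prop :=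
  ∀ x y : ℝ,
    P ({ω | X ω ≤ x} ∩ {ω | Y ω ≤ y}) = min (P {ω | X ω ≤ x}) (P {ω | Y ω ≤ y})

/-- `X` and `Y` are antimonotone:
`P(X ≤ x, Y ≤ y) = max (P(X ≤ x) + P(Y ≤ y) - 1) 0` for all `x y`
(in `ℝ≥0∞`, truncated subtraction realises the `max` with `0`). -/
def Antimonotone (P : Measure Ω) (X Y : Ω → ℝ) : Prop :=
  ∀ x y : ℝ,
    P ({ω | X ω ≤ x} ∩ {ω | Y ω ≤ y}) = (P {ω | X ω ≤ x} + P {ω | Y ω ≤ y}) - 1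

/-- `q` is a quantile function of `X` under `P`. -/
def IsQuantile (P : Measure Ω) (X : Ω → ℝ) (q : ℝ → ℝ) : Prop :=
  ∀ s ∈ Set.Ioo (0:ℝ) 1,
    sInf {x : ℝ | s ≤ (P {ω | X ω ≤ x}).toReal} ≤ q s ∧
    q s ≤ sInf {x : ℝ | s < (P {ω | X ω ≤ x}).toReal}

/-- `X` belongs to `L^∞(P)`: measurable and essentially bounded. -/
def MemLinf (P : Measure Ω) (X : Ω → ℝ) : Prop :=
  Measurable X ∧ ∃ M : ℝ, ∀ᵐ ω ∂P, |X ω| ≤ M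

/-- A pair `(𝒳, 𝒳*)` of law-invariant vector subspaces of `L¹(P)` containing `L^∞(P)`
such that `X * Y ∈ L¹(P)` for all `X ∈ 𝒳`, `Y ∈ 𝒳*` (Assumption 2.1). -/
structure PairedSpaces (P : Measure Ω) where
  carrier : Set (Ω → ℝ)
  dual : Set (Ω → ℝ)
  meas_carrier : ∀ X ∈ carrier, Measurable X
  meas_dual : ∀ Y ∈ dual, Measurable Y
  int_carrier : ∀ X ∈ carrier, Integrable X P
  int_dual : ∀ Y ∈ dual, Integrable Y P
  smul_carrier : ∀ X ∈ carrier, ∀ c : ℝ, (fun ω => c * X ω) ∈ carrier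
  add_carrier : ∀ X ∈ carrier, ∀ X' ∈ carrier, (fun ω => X ω + X' ω) ∈ carrier
  smul_dual : ∀ Y ∈ dual, ∀ c : ℝ, (fun ω => c * Y ω) ∈ dual
  add_dual : ∀ Y ∈ dual, ∀ Y' ∈ dual, (fun ω => Y ω + Y' ω) ∈ dual
  linf_carrier : ∀ X : Ω → ℝ, MemLinf P X → X ∈ carrier
  linf_dual : ∀ Y : Ω → ℝ, MemLinf P Y → Y ∈ dual
  lawinv_carrier : ∀ X ∈ carrier, ∀ X' : Ω → ℝ, Measurable X' → SameLaw P X' X → X' ∈ carrier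
  lawinv_dual : ∀ Y ∈ dual, ∀ Y' : Ω → ℝ, Measurable Y' → SameLaw P Y' Y → Y' ∈ dual
  mul_int : ∀ X ∈ carrier, ∀ Y ∈ dual, Integrable (fun ω => X ω * Y ω) P

/-- A subset `C` of `𝒳` is closed in the weak topology `σ(𝒳, 𝒳*)`, i.e. the topology
on `𝒳` induced by the linear functionals `X ↦ E[X Y]`, `Y ∈ 𝒳*`. -/
def WeakClosed (P : Measure Ω) (pr : PairedSpaces P) (C : Set (Ω → ℝ)) : Prop :=
  @IsClosed ↥pr.carrier
    (TopologicalSpace.induced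
      (fun X : ↥pr.carrier => (fun Y : ↥pr.dual => ∫ ω, (X : Ω → ℝ) ω * (Y : Ω → ℝ) ω ∂P))
      Pi.topologicalSpace)
    {X : ↥pr.carrier | (X : Ω → ℝ) ∈ C}

/-- `φ` is `σ(𝒳, 𝒳*)`-lower semicontinuous: every sublevel set is `σ(𝒳, 𝒳*)`-closed. -/
def WeakLSC (P : Measure Ω) (pr : PairedSpaces P) (φ : (Ω → ℝ) → EReal) : Prop :=
  ∀ m : ℝ, WeakClosed P pr {X | X ∈ pr.carrier ∧ φ X ≤ (m : EReal)}

/-- The (upper) support functional `σ_C(Y) = sup_{X ∈ C} E[XY]`. -/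
def suppFn (P : Measure Ω) (C : Set (Ω → ℝ)) (Y : Ω → ℝ) : EReal :=
  ⨆ X ∈ C, ((∫ ω, X ω * Y ω ∂P : ℝ) : EReal)

/-- The conjugate functional `φ*(Y) = sup_{X ∈ 𝒳} (E[XY] - φ(X))`. -/
def conj (P : Measure Ω) (𝒳 : Set (Ω → ℝ)) (φ : (Ω → ℝ) → EReal) (Y : Ω → ℝ) : EReal :=
  ⨆ X ∈ 𝒳, (((∫ ω, X ω * Y ω ∂P : ℝ) : EReal) - φ X)

/-- The recession cone `C^∞ = {X ∈ 𝒳 : {X} + C ⊆ C}`. -/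
def recCone (𝒳 C : Set (Ω → ℝ)) : Set (Ω → ℝ) :=
  {X | X ∈ 𝒳 ∧ ∀ U ∈ C, (fun ω => X ω + U ω) ∈ C}

/-- A functional on `𝒳` is law invariant. -/
def LawInvariantFn (P : Measure Ω) (𝒳 : Set (Ω → ℝ)) (φ : (Ω → ℝ) → EReal) : Prop :=
  ∀ X ∈ 𝒳, ∀ Y ∈ 𝒳, SameLaw P X Y → φ X = φ Y

/-- A set of random variables is law invariant. -/
def LawInvariantSet (P : Measure Ω) (C : Set (Ω → ℝ)) : Prop :=
  ∀ X ∈ C, ∀ Y : Ω → ℝ, Measurable Y → SameLaw P Y X → Y ∈ C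

/-- A functional on `𝒳` is expectation invariant. -/
def ExpectationInvariantFn (P : Measure Ω) (𝒳 : Set (Ω → ℝ)) (φ : (Ω → ℝ) → EReal) : Prop :=
  ∀ X ∈ 𝒳, ∀ Y ∈ 𝒳, (∫ ω, X ω ∂P) = (∫ ω, Y ω ∂P) → φ X = φ Y

/-- Convexity of a functional `φ : 𝒳 → (-∞, ∞]`. -/
def ConvexFn (𝒳 : Set (Ω → ℝ)) (φ : (Ω → ℝ) → EReal) : Prop :=
  ∀ X ∈ 𝒳, ∀ Y ∈ 𝒳, ∀ l : ℝ, l ∈ Set.Icc (0:ℝ) 1 →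
    φ (fun ω => l * X ω + (1 - l) * Y ω) ≤ (l : EReal) * φ X + ((1 - l : ℝ) : EReal) * φ Y

/-- Quasiconvexity of a functional `φ : 𝒳 → (-∞, ∞]`. -/
def QuasiconvexFn (𝒳 : Set (Ω → ℝ)) (φ : (Ω → ℝ) → EReal) : Prop :=
  ∀ X ∈ 𝒳, ∀ Y ∈ 𝒳, ∀ l : ℝ, l ∈ Set.Icc (0:ℝ) 1 →
    φ (fun ω => l * X ω + (1 - l) * Y ω) ≤ max (φ X) (φ Y)

/-- Convexity of a set of random variables. -/
def ConvexSet (C : Set (Ω → ℝ)) : Prop :=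
  ∀ X ∈ C, ∀ Y ∈ C, ∀ l : ℝ, l ∈ Set.Icc (0:ℝ) 1 →
    (fun ω => l * X ω + (1 - l) * Y ω) ∈ C

/-- The expectation of `Z` as an extended real number,
`E[Z] = ∫ Z⁺ dP - ∫ Z⁻ dP` computed in `EReal`. -/
def eExp (P : Measure Ω) (Z : Ω → ℝ) : EReal :=
  ((∫⁻ ω, ENNReal.ofReal (Z ω) ∂P : ℝ≥0∞) : EReal) -
    ((∫⁻ ω, ENNReal.ofReal (-(Z ω)) ∂P : ℝ≥0∞) : EReal)

/-- `X` dominates `Y` in the increasing convex (second-order stochastic dominance) sense: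
`E[f(X)] ≥ E[f(Y)]` for every nondecreasing convex `f : ℝ → ℝ`. -/
def SSDdom (P : Measure Ω) (X Y : Ω → ℝ) : Prop :=
  ∀ f : ℝ → ℝ, Monotone f → ConvexOn ℝ Set.univ f →
    eExp P (fun ω => f (Y ω)) ≤ eExp P (fun ω => f (X ω))

/-- A consistent risk measure on `𝒳`: a proper, cash-additive, normalised functional
that is consistent with second-order stochastic dominance. -/
def IsConsistentRM (P : Measure Ω) (𝒳 : Set (Ω → ℝ)) (φ : (Ω → ℝ) → EReal) : Prop :=
  (∀ X ∈ 𝒳, φ X ≠ (⊥ : EReal)) ∧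
  (∃ X ∈ 𝒳, φ X ≠ (⊤ : EReal)) ∧
  (∀ X ∈ 𝒳, ∀ m : ℝ, φ (fun ω => X ω + m) = φ X + (m : EReal)) ∧
  (∀ X ∈ 𝒳, ∀ Y ∈ 𝒳, SSDdom P X Y → φ Y ≤ φ X) ∧
  φ (fun _ => (0:ℝ)) = (0 : EReal)

/-- A capacity on `(Ω, F)`. -/
structure Capacity (Ω : Type*) [MeasurableSpace Ω] where
  toFun : Set Ω → ℝ
  empty' : toFun ∅ = 0
  univ' : toFun Set.univ = 1
  mono' : ∀ ⦃A B : Set Ω⦄, MeasurableSet A → MeasurableSet B → A ⊆ B → toFun A ≤ toFun B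
  nonneg' : ∀ A : Set Ω, MeasurableSet A → 0 ≤ toFun A
  le_one' : ∀ A : Set Ω, MeasurableSet A → toFun A ≤ 1

/-- A capacity is coherent if it is the upper envelope of a family of probability measures. -/
def Capacity.Coherent (ν : Capacity Ω) : Prop :=
  ∃ Q : Set (Measure Ω), Q.Nonempty ∧ (∀ m ∈ Q, IsProbabilityMeasure m) ∧
    ∀ A : Set Ω, MeasurableSet A → ν.toFun A = ⨆ m ∈ Q, (m A).toReal

/-- A capacity is law invariant (with respect to `P`). -/
def Capacity.LawInvariant (P : Measure Ω) (μ : Capacity Ω) : Prop :=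
  ∀ A B : Set Ω, MeasurableSet A → MeasurableSet B → P A = P B → μ.toFun A = μ.toFun B

/-- `μ` is the Jaffray-Philippe capacity represented by the pair `(ν, α)`:
`μ = α ν + (1 - α) ν̄` with `ν` coherent and `α ∈ [0,1]`,
where `ν̄(A) = 1 - ν(Aᶜ)` is the dual capacity. -/
def IsJPRep (μ ν : Capacity Ω) (α : ℝ) : Prop :=
  ν.Coherent ∧ α ∈ Set.Icc (0:ℝ) 1 ∧
    ∀ A : Set Ω, MeasurableSet A → μ.toFun A = α * ν.toFun A + (1 - α) * (1 - ν.toFun Aᶜ)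

/-- The Choquet integral `E_μ[X] = ∫_{-∞}^0 (μ(X > s) - 1) ds + ∫_0^∞ μ(X > s) ds`. -/
def choquet (μ : Capacity Ω) (X : Ω → ℝ) : ℝ :=
  (∫ s in Set.Iio (0:ℝ), (μ.toFun {ω | s < X ω} - 1)) +
    ∫ s in Set.Ici (0:ℝ), μ.toFun {ω | s < X ω}

/-- `X` is an optimal solution of: maximise `φ` over `C` subject to `E[D X] = p`. -/
def IsOptimal (P : Measure Ω) (φ : (Ω → ℝ) → EReal) (C : Set (Ω → ℝ)) (D : Ω → ℝ)
    (p : ℝ) (X : Ω → ℝ) : Prop :=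
  X ∈ C ∧ (∫ ω, D ω * X ω ∂P) = p ∧
    ∀ X' ∈ C, (∫ ω, D ω * X' ω ∂P) = p → φ X' ≤ φ X

/-- A set of random variables is increasing. -/
def IncreasingSet (C : Set (Ω → ℝ)) : Prop :=
  ∀ X ∈ C, ∀ m : ℝ, 0 ≤ m → (fun ω => X ω + m) ∈ C

/-- `φ` is weakly increasing: `φ(X + m) ≥ φ(X)` for `m ≥ 0`. -/
def WeaklyIncreasingFn (𝒳 : Set (Ω → ℝ)) (φ : (Ω → ℝ) → EReal) : Prop :=
  ∀ X ∈ 𝒳, ∀ m : ℝ, 0 ≤ m → φ X ≤ φ (fun ω => X ω + m)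

/-- `φ` is increasing: `φ(X + m) > φ(X)` whenever `φ(X) ∈ ℝ` and `m > 0`. -/
def IncreasingFn (𝒳 : Set (Ω → ℝ)) (φ : (Ω → ℝ) → EReal) : Prop :=
  ∀ X ∈ 𝒳, (φ X ≠ (⊤ : EReal) ∧ φ X ≠ (⊥ : EReal)) → ∀ m : ℝ, 0 < m →
    φ X < φ (fun ω => X ω + m)


/-! ### Atomless measures realise every law -/

theorem exists_countable_cofinal {α β : Type*} [CompleteLinearOrder β] [TopologicalSpace β]
    [OrderTopology β] [FirstCountableTopology β] (f : α → β) (T : Set α) :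
    ∃ T₀ ⊆ T, T₀.Countable ∧ ∀ A ∈ T, ∃ A' ∈ T₀, f A ≤ f A' := by
  by_cases h : ∃ A₀ ∈ T, ∀ A ∈ T, f A ≤ f A₀
  · obtain ⟨A₀, h₀, h₁⟩ := h
    exact ⟨{A₀}, by simpa using h₀, countable_singleton _, fun A hA => ⟨A₀, rfl, h₁ A hA⟩⟩
  push Not at h
  rcases T.eq_empty_or_nonempty with rfl | hT
  · exact ⟨∅, subset_rfl, countable_empty, by simp⟩
  obtain ⟨u, -, hu, huT⟩ := exists_seq_tendsto_sSup (hT.image f) (OrderTop.bddAbove _)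
  choose g hg hgu using huT
  refine ⟨range g, by rintro _ ⟨n, rfl⟩; exact hg n, countable_range g, fun A hA => ?_⟩
  obtain ⟨B, hB, hAB⟩ := h A hA
  have hlt : f A < sSup (f '' T) := hAB.trans_le (le_sSup ⟨B, hB, rfl⟩)
  obtain ⟨n, hn⟩ := (hu.eventually (lt_mem_nhds hlt)).exists
  exact ⟨g n, ⟨n, rfl⟩, by rw [hgu]; exact hn.le⟩

/-- A strengthening of Sierpiński's theorem: a finite atomless measure attains all intermediate
values along one chain of measurable sets. The chain `M` is maximal for the relation
`A ⊆ B ∧ μ A < μ B`. If a value `s` were missed, the union `L` of the members of measure `< s` and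
the intersection `H` of those of measure `> s` would leave room for a further member. -/
theorem IsAtomless.exists_chain {μ : Measure Ω} [IsFiniteMeasure μ] (hμ : IsAtomless μ) :
    ∃ M : Set (Set Ω), (∀ A ∈ M, MeasurableSet A) ∧
      (∀ A ∈ M, ∀ B ∈ M, μ A ≤ μ B → A ⊆ B) ∧ ∀ s ≤ μ univ, ∃ A ∈ M, μ A = s := by
  let r : {A : Set Ω // MeasurableSet A} → {A : Set Ω // MeasurableSet A} → Prop :=
    fun A B => A.1 ⊆ B.1 ∧ μ A.1 < μ B.1
  let M := maxChain r
  have hM : IsMaxChain r M := maxChain_spec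
  have comp : ∀ A ∈ M, ∀ B ∈ M, μ A.1 ≤ μ B.1 → A.1 ⊆ B.1 := by
    intro A hA B hB h
    by_cases hAB : A = B
    · rw [hAB]
    rcases hM.1 hA hB hAB with h' | h'
    · exact h'.1
    · exact absurd h'.2 h.not_gt
  have ins : ∀ B, (∀ A ∈ M, r A B ∨ r B A) → B ∈ M := by
    intro B hB
    have := hM.2 (hM.1.insert (a := B) fun A hA _ => (hB A hA).symm) (subset_insert _ _)
    rw [this]; exact mem_insert _ _
  refine ⟨Subtype.val '' M, ?_, ?_, ?_⟩
  · rintro _ ⟨A, -, rfl⟩; exact A.2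
  · rintro _ ⟨A, hA, rfl⟩ _ ⟨B, hB, rfl⟩; exact comp A hA B hB
  intro s hs
  by_contra hno
  have hne : ∀ A ∈ M, μ A.1 ≠ s := fun A hA h => hno ⟨A.1, ⟨A, hA, rfl⟩, h⟩
  obtain ⟨T₀, hT₀, hc₀, hcof₀⟩ :=
    exists_countable_cofinal (fun A : {A : Set Ω // MeasurableSet A} => μ A.1)
      {A | A ∈ M ∧ μ A.1 < s}
  obtain ⟨T₁, hT₁, hc₁, hcof₁⟩ :=
    exists_countable_cofinal
      (fun A : {A : Set Ω // MeasurableSet A} => OrderDual.toDual (μ A.1))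
      {A | A ∈ M ∧ s < μ A.1}
  -- Countable cofinal and coinitial subfamilies keep `L` and `H` measurable.
  have := hc₀.to_subtype
  have := hc₁.to_subtype
  let L : Set Ω := ⋃ A : T₀, A.1.1
  let H : Set Ω := ⋂ A : T₁, A.1.1
  have hLm : MeasurableSet L := MeasurableSet.iUnion fun A => A.1.2
  have hHm : MeasurableSet H := MeasurableSet.iInter fun A => A.1.2
  have hL : ∀ A ∈ M, μ A.1 < s → A.1 ⊆ L := by
    intro A hA h
    obtain ⟨A', hA', h'⟩ := hcof₀ A ⟨hA, h⟩
    exact (comp A hA A' (hT₀ hA').1 h').trans (subset_iUnion (fun A : T₀ => A.1.1) ⟨A', hA'⟩)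
  have hH : ∀ A ∈ M, s < μ A.1 → H ⊆ A.1 := by
    intro A hA h
    obtain ⟨A', hA', h'⟩ := hcof₁ A ⟨hA, h⟩
    exact (iInter_subset (fun A : T₁ => A.1.1) ⟨A', hA'⟩).trans
      (comp A' (hT₁ hA').1 A hA (OrderDual.toDual_le_toDual.1 h'))
  have hLH : L ⊆ H := iUnion_subset fun A => subset_iInter fun B =>
    comp _ (hT₀ A.2).1 _ (hT₁ B.2).1 ((hT₀ A.2).2.trans (hT₁ B.2).2).le
  have hLs : μ L ≤ s := by
    have hd : Directed (· ⊆ ·) fun A : T₀ => A.1.1 := by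
      intro A B
      rcases le_total (μ A.1.1) (μ B.1.1) with h | h
      · exact ⟨B, comp _ (hT₀ A.2).1 _ (hT₀ B.2).1 h, subset_rfl⟩
      · exact ⟨A, subset_rfl, comp _ (hT₀ B.2).1 _ (hT₀ A.2).1 h⟩
    rw [hd.measure_iUnion]
    exact iSup_le fun A => (hT₀ A.2).2.le
  have hHs : s ≤ μ H := by
    rcases isEmpty_or_nonempty T₁ with he | he
    · simpa [H] using hs
    have hd : Directed (· ⊇ ·) fun A : T₁ => A.1.1 := by
      intro A B
      rcases le_total (μ A.1.1) (μ B.1.1) with h | h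
      · exact ⟨A, subset_rfl, comp _ (hT₁ A.2).1 _ (hT₁ B.2).1 h⟩
      · exact ⟨B, comp _ (hT₁ B.2).1 _ (hT₁ A.2).1 h, subset_rfl⟩
    rw [hd.measure_iInter (fun A => A.1.2.nullMeasurableSet)
      ⟨he.some, measure_ne_top _ _⟩]
    exact le_iInf fun A => (hT₁ A.2).2.le
  have hLlt : μ L < s := by
    refine hLs.lt_of_ne fun h => hne ⟨L, hLm⟩ (ins _ fun A hA => ?_) h
    rcases (hne A hA).lt_or_gt with h' | h'
    · exact Or.inl ⟨hL A hA h', h'.trans_eq h.symm⟩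
    · exact Or.inr ⟨hLH.trans (hH A hA h'), h.trans_lt h'⟩
  have hHlt : s < μ H := by
    refine hHs.lt_of_ne fun h => hne ⟨H, hHm⟩ (ins _ fun A hA => ?_) h.symm
    rcases (hne A hA).lt_or_gt with h' | h'
    · exact Or.inl ⟨(hL A hA h').trans hLH, h'.trans_eq h⟩
    · exact Or.inr ⟨hH A hA h', h.symm.trans_lt h'⟩
  have hadd : μ L + μ (H \ L) = μ H := by
    rw [← measure_inter_add_sdiff H hLm, inter_eq_right.2 hLH]
  have hpos : 0 < μ (H \ L) := by
    rw [pos_iff_ne_zero]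
    intro h0
    rw [h0, add_zero] at hadd
    exact (hLlt.trans hHlt).ne hadd
  -- By atomlessness some `L ∪ B` has measure strictly between those of `L` and `H`.
  obtain ⟨B, hBm, hBs, hB0, hB1⟩ := hμ (H \ L) (hHm.diff hLm) hpos
  have hK : μ (L ∪ B) = μ L + μ B :=
    measure_union (disjoint_sdiff_right.mono_right hBs) hBm
  have hLK : μ L < μ (L ∪ B) := by
    rw [hK]; exact ENNReal.lt_add_right (measure_ne_top _ _) hB0.ne'
  have hKH : μ (L ∪ B) < μ H := by
    rw [hK, ← hadd]; exact ENNReal.add_lt_add_left (measure_ne_top _ _) hB1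
  have hKsub : L ∪ B ⊆ H := union_subset hLH (hBs.trans sdiff_subset)
  have hKM : (⟨L ∪ B, hLm.union hBm⟩ : {A : Set Ω // MeasurableSet A}) ∈ M := by
    refine ins _ fun A hA => ?_
    rcases (hne A hA).lt_or_gt with h' | h'
    · exact Or.inl ⟨(hL A hA h').trans subset_union_left,
        (measure_mono (hL A hA h')).trans_lt hLK⟩
    · exact Or.inr ⟨hKsub.trans (hH A hA h'), hKH.trans_le (measure_mono (hH A hA h'))⟩
  rcases (hne _ hKM).lt_or_gt with h' | h'
  · exact hLK.not_ge (measure_mono (hL _ hKM h'))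
  · exact hKH.not_ge (measure_mono (hH _ hKM h'))

theorem IsAtomless.restrict {μ : Measure Ω} (hμ : IsAtomless μ) {E : Set Ω}
    (hE : MeasurableSet E) : IsAtomless (μ.restrict E) := by
  intro A hA h
  rw [Measure.restrict_apply hA] at h
  obtain ⟨B, hB, hBs, h0, h1⟩ := hμ _ (hA.inter hE) h
  have : μ.restrict E B = μ B := by
    rw [Measure.restrict_apply hB, inter_eq_left.2 (hBs.trans inter_subset_right)]
  exact ⟨B, hB, hBs.trans inter_subset_left, by rwa [this],
    by rwa [this, Measure.restrict_apply hA]⟩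

theorem IsAtomless.exists_subset {μ : Measure Ω} [IsFiniteMeasure μ] (hμ : IsAtomless μ)
    {E : Set Ω} (hE : MeasurableSet E) {t : ℝ≥0∞} (ht : t ≤ μ E) :
    ∃ A ⊆ E, MeasurableSet A ∧ μ A = t := by
  obtain ⟨M, hm, -, hM⟩ := (hμ.restrict hE).exists_chain
  obtain ⟨A, hA, h⟩ := hM t (by simpa using ht)
  rw [Measure.restrict_apply (hm A hA)] at h
  exact ⟨A ∩ E, inter_subset_right, (hm A hA).inter hE, h⟩

/-- On a finite atomless measure space every Borel measure on `ℝ` of the right total mass is the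
law of a random variable. Choose `F q` with `μ (F q) = ν (Iic q)`, increasing in the rational `q`;
the variable is `ω ↦ inf {q | ω ∈ F q}`. -/
theorem IsAtomless.exists_map_eq {μ : Measure Ω} [IsFiniteMeasure μ] (hμ : IsAtomless μ)
    (ν : Measure ℝ) (hν : ν univ = μ univ) :
    ∃ f : Ω → ℝ, Measurable f ∧ Measure.map f μ = ν := by
  have : IsFiniteMeasure ν := ⟨by rw [hν]; exact measure_lt_top _ _⟩
  obtain ⟨M, hm, hmono, hM⟩ := hμ.exists_chain
  have hex : ∀ q : ℚ, ∃ A ∈ M, μ A = ν (Iic (q : ℝ)) := fun q =>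
    hM _ ((measure_mono (subset_univ _)).trans_eq hν)
  choose F hFM hF using hex
  have hFmono : ∀ q q' : ℚ, q ≤ q' → F q ⊆ F q' := fun q q' h =>
    hmono _ (hFM q) _ (hFM q') (by
      rw [hF, hF]; exact measure_mono (Iic_subset_Iic.2 (by exact_mod_cast h)))
  classical
  -- The infimum is taken in `EReal`, where it needs no boundedness; it is finite almost surely.
  let g : Ω → EReal := fun ω => ⨅ q : ℚ, if ω ∈ F q then ((q : ℝ) : EReal) else ⊤
  have hg : Measurable g := Measurable.iInf fun q =>
    Measurable.ite (hm _ (hFM q)) measurable_const measurable_const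
  have hcoe : Measurable (fun x : ℝ => (x : EReal)) := measurable_coe_real_ereal
  have key : ∀ x : EReal, μ (g ⁻¹' Iio x) = ν ((fun y : ℝ => (y : EReal)) ⁻¹' Iio x) := by
    intro x
    have h1 : g ⁻¹' Iio x = ⋃ q : {q : ℚ // ((q : ℝ) : EReal) < x}, F q := by
      ext ω
      simp only [g, mem_preimage, mem_Iio, iInf_lt_iff, mem_iUnion, Subtype.exists, exists_prop]
      refine exists_congr fun q => ?_
      by_cases hω : ω ∈ F q <;> simp [hω]
    have h2 : (fun y : ℝ => (y : EReal)) ⁻¹' Iio x =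
        ⋃ q : {q : ℚ // ((q : ℝ) : EReal) < x}, Iic ((q : ℚ) : ℝ) := by
      ext y
      simp only [mem_preimage, mem_Iio, mem_iUnion, Subtype.exists, exists_prop, mem_Iic]
      constructor
      · intro h
        obtain ⟨q, h3, h4⟩ := EReal.exists_rat_btwn_of_lt h
        exact ⟨q, h4, by exact_mod_cast h3.le⟩
      · rintro ⟨q, h3, h4⟩
        exact lt_of_le_of_lt (by exact_mod_cast h4) h3
    rw [h1, h2, Directed.measure_iUnion, Directed.measure_iUnion]
    · exact iSup_congr fun q => hF q
    · intro q q'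
      rcases le_total q.1 q'.1 with h | h
      · exact ⟨q', Iic_subset_Iic.2 (by exact_mod_cast h), subset_rfl⟩
      · exact ⟨q, subset_rfl, Iic_subset_Iic.2 (by exact_mod_cast h)⟩
    · intro q q'
      rcases le_total q.1 q'.1 with h | h
      · exact ⟨q', hFmono _ _ h, subset_rfl⟩
      · exact ⟨q, subset_rfl, hFmono _ _ h⟩
  have hmap : Measure.map g μ = Measure.map (fun x : ℝ => (x : EReal)) ν := by
    refine Measure.ext_of_Ici _ _ fun x => ?_
    rw [Measure.map_apply hg measurableSet_Ici, Measure.map_apply hcoe measurableSet_Ici,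
      ← compl_Iio, preimage_compl, preimage_compl,
      measure_compl (hg measurableSet_Iio) (measure_ne_top _ _),
      measure_compl (hcoe measurableSet_Iio) (measure_ne_top _ _), key, hν]
  refine ⟨fun ω => (g ω).toReal, hg.ereal_toReal, ?_⟩
  have := congrArg (Measure.map EReal.toReal) hmap
  rw [Measure.map_map measurable_ereal_toReal hg,
    Measure.map_map measurable_ereal_toReal hcoe] at this
  simpa [Function.comp_def] using this

/-! ### Laws and antimonotonicity -/

/-- The mean of a nonconstant integrable `X` separates its values into two sets of positive
probability. -/
theorem Nonconstant.exists_threshold {P : Measure Ω} [IsProbabilityMeasure P] {X : Ω → ℝ}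
    (hX : Integrable X P) (hnc : Nonconstant P X) :
    ∃ c : ℝ, 0 < P {ω | X ω ≤ c} ∧ 0 < P {ω | c < X ω} := by
  refine ⟨∫ ω, X ω ∂P, ?_, ?_⟩ <;> rw [pos_iff_ne_zero] <;> intro h
  · have hae : ∀ᵐ ω ∂P, (∫ ω, X ω ∂P) ≤ X ω := by
      filter_upwards [measure_eq_zero_iff_ae_notMem.1 h] with ω hω
      exact (not_le.1 hω).le
    exact hnc _ ((integral_eq_iff_of_ae_le (integrable_const _) hX hae).1 (by simp)).symm
  · have hae : ∀ᵐ ω ∂P, X ω ≤ ∫ ω, X ω ∂P := by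
      filter_upwards [measure_eq_zero_iff_ae_notMem.1 h] with ω hω
      exact not_lt.1 hω
    exact hnc _ ((integral_eq_iff_of_ae_le hX (integrable_const _) hae).1 (by simp))

/-- Antimonotonicity determines the joint distribution function of `(X, D)` from the marginals, so
`E[D X]` takes the same value at all antimonotone `X` of a given law. -/
theorem Antimonotone.integral_eq {P : Measure Ω} [IsProbabilityMeasure P] {X X' D : Ω → ℝ}
    (hX : Measurable X) (hX' : Measurable X') (hD : Measurable D) (hlaw : SameLaw P X X')
    (h : Antimonotone P X D) (h' : Antimonotone P X' D) :
    ∫ ω, D ω * X ω ∂P = ∫ ω, D ω * X' ω ∂P := by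
  have hspan : IsCountablySpanning (range (Iic : ℝ → Set ℝ)) :=
    ⟨fun n => Iic (n : ℝ), fun n => ⟨n, rfl⟩, iUnion_Iic_of_not_bddAbove_range
      (by
        rintro ⟨b, hb⟩
        obtain ⟨n, hn⟩ := exists_nat_gt b
        exact hn.not_ge (hb ⟨n, rfl⟩))⟩
  have hgen : MeasurableSpace.generateFrom (range (Iic : ℝ → Set ℝ)) =
      (inferInstance : MeasurableSpace ℝ) :=
    (borel_eq_generateFrom_Iic ℝ).symm.trans (BorelSpace.measurable_eq (α := ℝ)).symm
  have hjoint : Measure.map (fun ω => (X ω, D ω)) P = Measure.map (fun ω => (X' ω, D ω)) P := by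
    have : IsProbabilityMeasure (Measure.map (fun ω => (X ω, D ω)) P) :=
      Measure.isProbabilityMeasure_map (hX.prodMk hD).aemeasurable
    have : IsProbabilityMeasure (Measure.map (fun ω => (X' ω, D ω)) P) :=
      Measure.isProbabilityMeasure_map (hX'.prodMk hD).aemeasurable
    refine ext_of_generate_finite _ (generateFrom_eq_prod hgen hgen hspan hspan).symm
      (isPiSystem_Iic.prod isPiSystem_Iic) ?_ (by simp)
    rintro _ ⟨_, ⟨x, rfl⟩, _, ⟨y, rfl⟩, rfl⟩
    have hm : MeasurableSet (Iic x ×ˢ Iic y : Set (ℝ × ℝ)) :=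
      measurableSet_Iic.prod measurableSet_Iic
    have hcdf : P {ω | X ω ≤ x} = P {ω | X' ω ≤ x} := by
      have e := congrArg (fun m => m (Iic x)) hlaw
      simp only [Measure.map_apply hX measurableSet_Iic,
        Measure.map_apply hX' measurableSet_Iic] at e
      exact e
    rw [Measure.map_apply (hX.prodMk hD) hm, Measure.map_apply (hX'.prodMk hD) hm]
    have e := h x y
    rw [hcdf, ← h' x y] at e
    exact e
  have hmul : Measurable fun z : ℝ × ℝ => z.2 * z.1 := measurable_snd.mul measurable_fst
  have e := congrArg (fun m => ∫ z, z.2 * z.1 ∂m) hjoint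
  simpa only [integral_map (hX.prodMk hD).aemeasurable hmul.aestronglyMeasurable,
    integral_map (hX'.prodMk hD).aemeasurable hmul.aestronglyMeasurable] using e

/-! ### Two rearrangements with different prices -/

theorem restrict_three (P : Measure Ω) {A B : Set Ω} (hA : MeasurableSet A)
    (hB : MeasurableSet B) (hAB : Disjoint A B) :
    P.restrict A + P.restrict B + P.restrict (A ∪ B)ᶜ = P := by
  rw [← Measure.restrict_union hAB hB, Measure.restrict_add_restrict_compl (hA.union hB)]

open Classical in
theorem map_piecewise_three (P : Measure Ω) {A B : Set Ω} (hA : MeasurableSet A)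
    (hB : MeasurableSet B) (hAB : Disjoint A B) {f g h : Ω → ℝ} (hf : Measurable f)
    (hg : Measurable g) (hh : Measurable h) :
    Measure.map (A.piecewise f (B.piecewise g h)) P =
      Measure.map f (P.restrict A) + Measure.map g (P.restrict B) +
        Measure.map h (P.restrict (A ∪ B)ᶜ) := by
  have hm : Measurable (A.piecewise f (B.piecewise g h)) := hf.piecewise hA (hg.piecewise hB hh)
  conv_lhs => rw [← restrict_three P hA hB hAB]
  rw [Measure.map_add _ _ hm, Measure.map_add _ _ hm]
  congr 1
  · congr 1
    · refine Measure.map_congr ((ae_restrict_iff' hA).2 (ae_of_all _ fun ω hω => ?_))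
      simp [hω]
    · refine Measure.map_congr ((ae_restrict_iff' hB).2 (ae_of_all _ fun ω hω => ?_))
      simp [hω, disjoint_right.1 hAB hω]
  · refine Measure.map_congr ((ae_restrict_iff' (hA.union hB).compl).2
      (ae_of_all _ fun ω hω => ?_))
    simp only [mem_compl_iff, mem_union, not_or] at hω
    simp [hω.1, hω.2]

/-- The law of `X` on `E'` can be reproduced on any event `E` of the same probability. -/
theorem IsAtomless.exists_transport {P : Measure Ω} [IsFiniteMeasure P] (hP : IsAtomless P)
    {X : Ω → ℝ} (hX : Measurable X) {E E' : Set Ω} (hE : MeasurableSet E) (h : P E = P E') :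
    ∃ f : Ω → ℝ, Measurable f ∧ Measure.map f (P.restrict E) = Measure.map X (P.restrict E') := by
  refine (hP.restrict hE).exists_map_eq _ ?_
  rw [Measure.map_apply hX MeasurableSet.univ]
  simp [h]

theorem ae_of_map_restrict_eq {P : Measure Ω} {X f : Ω → ℝ} (hX : Measurable X)
    (hf : Measurable f) {E E' : Set Ω} (hE : MeasurableSet E) (hE' : MeasurableSet E')
    (h : Measure.map f (P.restrict E) = Measure.map X (P.restrict E')) {S : Set ℝ}
    (hS : MeasurableSet S) (hXS : ∀ ω ∈ E', X ω ∈ S) : ∀ᵐ ω ∂P, ω ∈ E → f ω ∈ S := by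
  have hXae : ∀ᵐ x ∂(Measure.map X (P.restrict E')), x ∈ S :=
    (ae_map_iff hX.aemeasurable hS).2 ((ae_restrict_iff' hE').2 (ae_of_all _ hXS))
  rw [← h] at hXae
  exact (ae_restrict_iff' hE).1 ((ae_map_iff hf.aemeasurable hS).1 hXae)

/-- The pairing `E[D · ]` is not constant on the law class of a nonconstant `X`: on an event where
`D` is small and an event where `D` is large, of equal probability, exchange a batch of low values
of `X` with a batch of high values. -/
theorem exists_integral_ne {P : Measure Ω} [IsProbabilityMeasure P] (hP : IsAtomless P)
    (pr : PairedSpaces P) {D X : Ω → ℝ} (hD : D ∈ pr.dual) (hDnc : Nonconstant P D)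
    (hX : X ∈ pr.carrier) (hXnc : Nonconstant P X) :
    ∃ X₁ X₂ : Ω → ℝ, (Measurable X₁ ∧ SameLaw P X₁ X) ∧ (Measurable X₂ ∧ SameLaw P X₂ X) ∧
      ∫ ω, D ω * X₁ ω ∂P ≠ ∫ ω, D ω * X₂ ω ∂P := by
  classical
  have hXm := pr.meas_carrier X hX
  have hDm := pr.meas_dual D hD
  obtain ⟨c, hc0, hc1⟩ := hXnc.exists_threshold (pr.int_carrier X hX)
  obtain ⟨d, hd0, hd1⟩ := hDnc.exists_threshold (pr.int_dual D hD)
  obtain ⟨t, ht, ht1, ht2, ht3, ht4⟩ : ∃ t : ℝ≥0∞, 0 < t ∧ t ≤ P {ω | X ω ≤ c} ∧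
      t ≤ P {ω | c < X ω} ∧ t ≤ P {ω | D ω ≤ d} ∧ t ≤ P {ω | d < D ω} :=
    ⟨min (min (P {ω | X ω ≤ c}) (P {ω | c < X ω})) (min (P {ω | D ω ≤ d}) (P {ω | d < D ω})),
      by simp only [lt_min_iff]; exact ⟨⟨hc0, hc1⟩, hd0, hd1⟩, by simp, by simp, by simp, by simp⟩
  obtain ⟨A', hA's, hA'm, hA'⟩ := hP.exists_subset (measurableSet_le hXm measurable_const) ht1
  obtain ⟨B', hB's, hB'm, hB'⟩ := hP.exists_subset (measurableSet_lt measurable_const hXm) ht2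
  obtain ⟨A, hAs, hAm, hA⟩ := hP.exists_subset (measurableSet_le hDm measurable_const) ht3
  obtain ⟨B, hBs, hBm, hB⟩ := hP.exists_subset (measurableSet_lt measurable_const hDm) ht4
  have hdisj : Disjoint A B := disjoint_left.2 fun ω h1 h2 =>
    not_lt_of_ge (show D ω ≤ d from hAs h1) (hBs h2)
  have hdisj' : Disjoint A' B' := disjoint_left.2 fun ω h1 h2 =>
    not_lt_of_ge (show X ω ≤ c from hA's h1) (hB's h2)
  have hR : P (A ∪ B)ᶜ = P (A' ∪ B')ᶜ := by
    rw [prob_compl_eq_one_sub (hAm.union hBm), prob_compl_eq_one_sub (hA'm.union hB'm),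
      measure_union hdisj hBm, measure_union hdisj' hB'm, hA, hB, hA', hB']
  obtain ⟨h, hhm, hh⟩ := hP.exists_transport hXm (hAm.union hBm).compl hR
  obtain ⟨f₁, hf₁m, hf₁⟩ := hP.exists_transport hXm hAm (hA.trans hA'.symm)
  obtain ⟨g₁, hg₁m, hg₁⟩ := hP.exists_transport hXm hBm (hB.trans hB'.symm)
  obtain ⟨f₂, hf₂m, hf₂⟩ := hP.exists_transport hXm hAm (hA.trans hB'.symm)
  obtain ⟨g₂, hg₂m, hg₂⟩ := hP.exists_transport hXm hBm (hB.trans hA'.symm)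
  have hlaw : Measure.map X (P.restrict A') + Measure.map X (P.restrict B') +
      Measure.map X (P.restrict (A' ∪ B')ᶜ) = Measure.map X P := by
    rw [← Measure.map_add _ _ hXm, ← Measure.map_add _ _ hXm, restrict_three P hA'm hB'm hdisj']
  -- `X₁` is low (`≤ c`) on `A` and high (`> c`) on `B`; `X₂` is high on `A` and low on `B`.
  let X₁ : Ω → ℝ := A.piecewise f₁ (B.piecewise g₁ h)
  let X₂ : Ω → ℝ := A.piecewise f₂ (B.piecewise g₂ h)
  have hX₁m : Measurable X₁ := hf₁m.piecewise hAm (hg₁m.piecewise hBm hhm)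
  have hX₂m : Measurable X₂ := hf₂m.piecewise hAm (hg₂m.piecewise hBm hhm)
  have hl₁ : SameLaw P X₁ X := by
    rw [SameLaw, map_piecewise_three P hAm hBm hdisj hf₁m hg₁m hhm, hf₁, hg₁, hh, hlaw]
  have hl₂ : SameLaw P X₂ X := by
    rw [SameLaw, map_piecewise_three P hAm hBm hdisj hf₂m hg₂m hhm, hf₂, hg₂, hh,
      add_comm (Measure.map X (P.restrict B')), hlaw]
  refine ⟨X₁, X₂, ⟨hX₁m, hl₁⟩, ⟨hX₂m, hl₂⟩, fun heq => ?_⟩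
  have hc₁ := pr.lawinv_carrier X hX X₁ hX₁m hl₁
  have hc₂ := pr.lawinv_carrier X hX X₂ hX₂m hl₂
  have hi₁ : Integrable (fun ω => D ω * X₁ ω) P := by
    simpa only [mul_comm] using pr.mul_int X₁ hc₁ D hD
  have hi₂ : Integrable (fun ω => D ω * X₂ ω) P := by
    simpa only [mul_comm] using pr.mul_int X₂ hc₂ D hD
  have hj₁ := (pr.int_carrier X₁ hc₁).const_mul d
  have hj₂ := (pr.int_carrier X₂ hc₂).const_mul d
  have hE : ∫ ω, X₁ ω ∂P = ∫ ω, X₂ ω ∂P := by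
    have e := congrArg (fun m => ∫ z, z ∂m) (Eq.trans hl₁ (Eq.symm hl₂))
    have hid : ∀ m : Measure ℝ, AEStronglyMeasurable (fun z : ℝ => z) m :=
      fun m => measurable_id.aestronglyMeasurable
    simpa only [integral_map hX₁m.aemeasurable (hid _),
      integral_map hX₂m.aemeasurable (hid _)] using e
  -- `Z = (D - d) (X₁ - X₂)`; since `E[X₁] = E[X₂]`, its mean is `E[D X₁] - E[D X₂]`.
  let Z : Ω → ℝ := fun ω => (D ω * X₁ ω - D ω * X₂ ω) - (d * X₁ ω - d * X₂ ω)
  have hZi : Integrable Z P := (hi₁.sub hi₂).sub (hj₁.sub hj₂)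
  have hZ0 : ∫ ω, Z ω ∂P = 0 := by
    have : ∫ ω, Z ω ∂P = (∫ ω, D ω * X₁ ω ∂P - ∫ ω, D ω * X₂ ω ∂P) -
        (∫ ω, d * X₁ ω ∂P - ∫ ω, d * X₂ ω ∂P) := by
      rw [← integral_sub hi₁ hi₂, ← integral_sub hj₁ hj₂]
      exact integral_sub (hi₁.sub hi₂) (hj₁.sub hj₂)
    rw [this, heq, integral_const_mul, integral_const_mul, hE]; ring
  have a₁ := ae_of_map_restrict_eq hXm hf₁m hAm hA'm hf₁ measurableSet_Iic hA's
  have b₁ := ae_of_map_restrict_eq hXm hg₁m hBm hB'm hg₁ measurableSet_Ioi hB's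
  have a₂ := ae_of_map_restrict_eq hXm hf₂m hAm hB'm hf₂ measurableSet_Ioi hB's
  have b₂ := ae_of_map_restrict_eq hXm hg₂m hBm hA'm hg₂ measurableSet_Iic hA's
  have hZB : ∀ᵐ ω ∂P, ω ∈ B → 0 < Z ω := by
    filter_upwards [b₁, b₂] with ω h1 h2 hω
    have hnA : ω ∉ A := disjoint_right.1 hdisj hω
    have h1' : c < g₁ ω := h1 hω
    have h2' : g₂ ω ≤ c := h2 hω
    have hD' : d < D ω := hBs hω
    have e1 : X₁ ω = g₁ ω := by simp [X₁, hnA, hω]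
    have e2 : X₂ ω = g₂ ω := by simp [X₂, hnA, hω]
    simp only [Z, e1, e2]
    nlinarith
  have hZnn : 0 ≤ᵐ[P] Z := by
    filter_upwards [a₁, a₂, hZB] with ω h1 h2 h3
    by_cases hωB : ω ∈ B
    · exact (h3 hωB).le
    by_cases hωA : ω ∈ A
    · have h1' : f₁ ω ≤ c := h1 hωA
      have h2' : c < f₂ ω := h2 hωA
      have hD' : D ω ≤ d := hAs hωA
      have e1 : X₁ ω = f₁ ω := by simp [X₁, hωA]
      have e2 : X₂ ω = f₂ ω := by simp [X₂, hωA]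
      simp only [Z, e1, e2, Pi.zero_apply]
      nlinarith
    · have e : X₁ ω = X₂ ω := by simp [X₁, X₂, hωA, hωB]
      simp [Z, e]
  have hZae := (integral_eq_zero_iff_of_nonneg_ae hZnn hZi).1 hZ0
  have hBnull : P B = 0 := by
    refine measure_eq_zero_iff_ae_notMem.2 ?_
    filter_upwards [hZae, hZB] with ω h1 h2 hω
    exact (h2 hω).ne' h1
  exact ht.ne' (hB.symm.trans hBnull)

/-- Some price attained on the law class of `X₀` is attained by none of its members that are
antimonotone with `D`. -/
theorem exists_price {P : Measure Ω} [IsProbabilityMeasure P] (hP : IsAtomless P)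
    (pr : PairedSpaces P) {D X₀ : Ω → ℝ} (hD : D ∈ pr.dual) (hDnc : Nonconstant P D)
    (hX₀ : X₀ ∈ pr.carrier) (hX₀nc : Nonconstant P X₀) :
    ∃ X₁ : Ω → ℝ, (Measurable X₁ ∧ SameLaw P X₁ X₀) ∧
      ∀ X : Ω → ℝ, Measurable X → SameLaw P X X₀ →
        ∫ ω, D ω * X ω ∂P = ∫ ω, D ω * X₁ ω ∂P → ¬ Antimonotone P X D := by
  obtain ⟨X₁, X₂, h₁, h₂, hne⟩ := exists_integral_ne hP pr hD hDnc hX₀ hX₀nc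
  by_contra! hcon
  obtain ⟨Y₁, hY₁m, hY₁l, hY₁, ha₁⟩ := hcon X₁ h₁
  obtain ⟨Y₂, hY₂m, hY₂l, hY₂, ha₂⟩ := hcon X₂ h₂
  exact hne (hY₁.symm.trans ((Antimonotone.integral_eq hY₁m hY₂m (pr.meas_dual D hD)
    (Eq.trans hY₁l (Eq.symm hY₂l)) ha₁ ha₂).trans hY₂))

/-- The constraint set `C` is the law class of `X₀`; law invariance makes `φ` constant on it, so
that every element of `C` satisfying the price constraint is optimal. -/
theorem exists_quadruple {P : Measure Ω} [IsProbabilityMeasure P] (hP : IsAtomless P)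
    (pr : PairedSpaces P) {D X₀ : Ω → ℝ} (hD : D ∈ pr.dual) (hDnc : Nonconstant P D)
    (hX₀ : X₀ ∈ pr.carrier) (hX₀nc : Nonconstant P X₀)
    {φ : (Ω → ℝ) → EReal} (hφ : LawInvariantFn P pr.carrier φ) :
    ∃ C : Set (Ω → ℝ), ∃ p : ℝ, C ⊆ pr.carrier ∧ LawInvariantSet P C ∧
      (∃ X, IsOptimal P φ C D p X ∧ φ X = φ X₀) ∧
      (∀ X, IsOptimal P φ C D p X → ¬ Antimonotone P X D) := by
  obtain ⟨X₁, h₁, hX₁⟩ := exists_price hP pr hD hDnc hX₀ hX₀nc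
  have hC : ∀ X, Measurable X ∧ SameLaw P X X₀ → X ∈ pr.carrier ∧ φ X = φ X₀ := fun X h =>
    have hX := pr.lawinv_carrier X₀ hX₀ X h.1 h.2
    ⟨hX, hφ X hX X₀ hX₀ h.2⟩
  refine ⟨{X | Measurable X ∧ SameLaw P X X₀}, ∫ ω, D ω * X₁ ω ∂P, fun X h => (hC X h).1,
    fun X h Y hY hYX => ⟨hY, Eq.trans hYX h.2⟩, ⟨X₁, ⟨h₁, rfl, fun X' h' _ => ?_⟩, (hC _ h₁).2⟩,
    fun X h => hX₁ X h.1.1 h.1.2 h.2.1⟩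
  rw [(hC X' h').2, (hC X₁ h₁).2]

theorem exists_nonconstant {P : Measure Ω} [IsProbabilityMeasure P] (hP : IsAtomless P)
    (pr : PairedSpaces P) : ∃ X₀ ∈ pr.carrier, Nonconstant P X₀ := by
  obtain ⟨B, hB, -, h0, h1⟩ := hP univ MeasurableSet.univ (by simp)
  refine ⟨B.indicator 1, pr.linf_carrier _ ⟨measurable_one.indicator hB, 1, ae_of_all _ fun ω => ?_⟩,
    fun c hc => ?_⟩
  · by_cases hω : ω ∈ B <;> simp [hω]
  · by_cases h : c = 1
    · refine h1.ne ((prob_compl_eq_zero_iff hB).1 (measure_eq_zero_iff_ae_notMem.2 ?_) |>.trans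
        measure_univ.symm)
      filter_upwards [hc] with ω hω hn
      simp [show ω ∉ B from hn, h] at hω
    · refine h0.ne' (measure_eq_zero_iff_ae_notMem.2 ?_)
      filter_upwards [hc] with ω hω hn
      simp only [indicator_of_mem hn, Pi.one_apply] at hω
      exact h hω.symm

/-- for every law-invariant objective `φ` and nonconstant `D` with
`E[D] > 0` there is a feasible quadruple with no antimonotone optimal solution;
if moreover `φ` is finite at some nonconstant point, the quadruple can be chosen with
finite optimal value and an optimal solution that is not antimonotone with `D`. -/
theorem sharpness_no_monotonicity
    (P : Measure Ω) [IsProbabilityMeasure P] (hP : IsAtomless P)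
    (pr : PairedSpaces P) (D : Ω → ℝ) (hD : D ∈ pr.dual)
    (hDnc : Nonconstant P D) (hED : 0 < ∫ ω, D ω ∂P) :
    (∀ φ : (Ω → ℝ) → EReal, LawInvariantFn P pr.carrier φ →
      ∃ C : Set (Ω → ℝ), ∃ p : ℝ, C ⊆ pr.carrier ∧ LawInvariantSet P C ∧
        (∃ X, IsOptimal P φ C D p X) ∧
        (∀ X, IsOptimal P φ C D p X → ¬ Antimonotone P X D)) ∧
    (∀ φ : (Ω → ℝ) → EReal, LawInvariantFn P pr.carrier φ →
      (∃ X₀ ∈ pr.carrier, Nonconstant P X₀ ∧ φ X₀ ≠ (⊤ : EReal) ∧ φ X₀ ≠ (⊥ : EReal)) →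
      ∃ C : Set (Ω → ℝ), ∃ p : ℝ, C ⊆ pr.carrier ∧ LawInvariantSet P C ∧
        (∃ X, IsOptimal P φ C D p X) ∧
        (∀ X, IsOptimal P φ C D p X → ¬ Antimonotone P X D) ∧
        (∃ X, IsOptimal P φ C D p X ∧ φ X ≠ (⊤ : EReal) ∧ φ X ≠ (⊥ : EReal)) ∧
        (∃ X, IsOptimal P φ C D p X ∧ ¬ Antimonotone P X D)) := by
  have hmain := fun X₀ h₀ hnc φ hφ =>
    exists_quadruple (X₀ := X₀) (φ := φ) hP pr hD hDnc h₀ hnc hφ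
  refine ⟨fun φ hφ => ?_, fun φ hφ ⟨X₀, h₀, hnc, htop, hbot⟩ => ?_⟩
  · obtain ⟨X₀, h₀, hnc⟩ := exists_nonconstant hP pr
    obtain ⟨C, p, hC, hinv, ⟨X, hX, -⟩, hno⟩ := hmain X₀ h₀ hnc φ hφ
    exact ⟨C, p, hC, hinv, ⟨X, hX⟩, hno⟩
  · obtain ⟨C, p, hC, hinv, ⟨X, hX, hval⟩, hno⟩ := hmain X₀ h₀ hnc φ hφ
    exact ⟨C, p, hC, hinv, ⟨X, hX⟩, hno, ⟨X, hX, hval ▸ htop, hval ▸ hbot⟩, ⟨X, hX, hno X hX⟩⟩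

end Collapse
end
end

section
/- Let a < b be real numbers and C = {X ∈ X : a ≤ X ≤ b P-a.s.}. For every nonconstant D ∈ X* with E[D] > 0 there exist a law-invariant functional φ : X → [−∞, ∞] and p ∈ ℝ such that (φ, C, D, p) is a feasible quadruple and: (i) φ is weakly increasing but no optimal solution is antimonotone with D; (ii) φ is increasing and Max(φ, C, D, p) ∈ ℝ but some optimal solution is not antimonotone with D. -/
/-!
A single objective and price witness all the claims at once. Put `c = E[D]` and let `Z` be `b`
on `{D > c}` and `a` on `{D ≤ c}`; since `D` is nonconstant both events have positive
probability. The objective is `-E[X]` on variables with essential supremum exactly `b`, `⊥` if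
the essential supremum is smaller, and `⊤` if it is larger. It is law invariant, and it is
increasing because a positive shift of a variable with essential supremum `b` lands in the `⊤`
region, which the interval constraint excludes. The price is `p = E[D * Z]`.

For `X` valued in `[a, b]` one has `(D - c) * (Z - X) ≥ 0`, so at equal prices
`c * (E[X] - E[Z]) ≥ 0`. As `c > 0`, the variable `Z` has the smallest mean among the
competitors and is optimal with finite value (`twoPoint_mean_le`). The equality case shows that
every optimal solution equals `Z` almost surely (`ae_eq_twoPoint`), and `Z`, being an increasing
function of `D` that is not almost surely constant, is not antimonotone with `D`
(`not_antimonotone_of_ae_eq`).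
-/

open MeasureTheory Set List
open scoped ENNReal NNReal

noncomputable section

namespace Collapse

variable {Ω : Type*} [MeasurableSpace Ω]

open Classical in
/-- Objective functional which is `⊥` if the essential supremum of `X` is below `b`, `⊤` if it is
above `b`, and `-E[X]` if it equals `b`: any positive cash shift pushes a variable with essential
supremum `b` into the `⊤` region, so the functional is increasing although it prefers small means. -/
def objective (P : Measure Ω) (b : ℝ) (X : Ω → ℝ) : EReal :=
  if ∃ ε > (0:ℝ), ∀ᵐ ω ∂P, X ω ≤ b - ε then ⊥
  else if ∀ᵐ ω ∂P, X ω ≤ b then ((-(∫ ω, X ω ∂P) : ℝ) : EReal) else ⊤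

lemma SameLaw.ae_le_iff {P : Measure Ω} {X Y : Ω → ℝ} (hX : Measurable X) (hY : Measurable Y)
    (h : SameLaw P X Y) (t : ℝ) : (∀ᵐ ω ∂P, X ω ≤ t) ↔ ∀ᵐ ω ∂P, Y ω ≤ t := by
  rw [← ae_map_iff (p := fun x : ℝ => x ≤ t) hX.aemeasurable measurableSet_Iic,
    ← ae_map_iff (p := fun x : ℝ => x ≤ t) hY.aemeasurable measurableSet_Iic, h]

lemma SameLaw.integral_eq {P : Measure Ω} {X Y : Ω → ℝ} (hX : Measurable X) (hY : Measurable Y)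
    (h : SameLaw P X Y) : ∫ ω, X ω ∂P = ∫ ω, Y ω ∂P := by
  have hx := integral_map (μ := P) hX.aemeasurable (f := fun x : ℝ => x)
    measurable_id.aestronglyMeasurable
  have hy := integral_map (μ := P) hY.aemeasurable (f := fun x : ℝ => x)
    measurable_id.aestronglyMeasurable
  rw [← hx, ← hy, h]

lemma objective_lawInvariant (P : Measure Ω) (pr : PairedSpaces P) (b : ℝ) :
    LawInvariantFn P pr.carrier (objective P b) := by
  intro X hX Y hY h
  have hX := pr.meas_carrier X hX
  have hY := pr.meas_carrier Y hY
  have h1 : (∃ ε > (0:ℝ), ∀ᵐ ω ∂P, X ω ≤ b - ε) ↔ ∃ ε > (0:ℝ), ∀ᵐ ω ∂P, Y ω ≤ b - ε :=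
    exists_congr fun ε => and_congr_right fun _ => h.ae_le_iff hX hY (b - ε)
  unfold objective
  rw [h.integral_eq hX hY]
  classical
  exact if_congr h1 rfl (if_congr (h.ae_le_iff hX hY b) rfl rfl)

lemma objective_increasing (P : Measure Ω) (𝒳 : Set (Ω → ℝ)) (b : ℝ) :
    IncreasingFn 𝒳 (objective P b) := by
  rintro X - ⟨htop, hbot⟩ m hm
  by_cases h1 : ∃ ε > (0:ℝ), ∀ᵐ ω ∂P, X ω ≤ b - ε
  · exact absurd (by simp only [objective, if_pos h1]) hbot
  have h2 : ¬ ∀ᵐ ω ∂P, X ω + m ≤ b := fun h =>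
    h1 ⟨m, hm, by filter_upwards [h] with ω h; linarith⟩
  have h3 : ¬ ∃ ε > (0:ℝ), ∀ᵐ ω ∂P, X ω + m ≤ b - ε := by
    rintro ⟨ε, hε, h⟩
    exact h2 (by filter_upwards [h] with ω h; linarith)
  have h4 : objective P b (fun ω => X ω + m) = ⊤ := by
    simp only [objective, if_neg h3, if_neg h2]
  rw [h4]
  exact lt_top_iff_ne_top.2 htop

/-- Weak monotonicity follows from strict monotonicity at finite values and the fact that the
value `⊤` persists under positive shifts. -/
lemma objective_weaklyIncreasing (P : Measure Ω) (𝒳 : Set (Ω → ℝ)) (b : ℝ) :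
    WeaklyIncreasingFn 𝒳 (objective P b) := by
  intro X hX m hm
  rcases hm.eq_or_lt with rfl | hm
  · simp
  by_cases hbot : objective P b X = ⊥
  · simp [hbot]
  by_cases htop : objective P b X = ⊤
  · have h2 : ¬ ∀ᵐ ω ∂P, X ω ≤ b := by
      intro h
      unfold objective at htop
      split_ifs at htop <;> simp_all
    have h3 : ¬ ∀ᵐ ω ∂P, X ω + m ≤ b := fun h =>
      h2 (by filter_upwards [h] with ω h; linarith)
    have h4 : ¬ ∃ ε > (0:ℝ), ∀ᵐ ω ∂P, X ω + m ≤ b - ε := by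
      rintro ⟨ε, hε, h⟩
      exact h3 (by filter_upwards [h] with ω h; linarith)
    have h5 : objective P b (fun ω => X ω + m) = ⊤ := by
      simp only [objective, if_neg h3, if_neg h4]
    rw [h5]
    exact le_top
  · exact (objective_increasing P 𝒳 b X hX ⟨htop, hbot⟩ m hm).le

/-- A nonconstant variable exceeds its mean with probability strictly between `0` and `1`. -/
lemma measure_gt_mean {P : Measure Ω} [IsProbabilityMeasure P] {D : Ω → ℝ}
    (hD : Integrable D P) (hnc : Nonconstant P D) :
    (¬ ∀ᵐ ω ∂P, D ω ≤ ∫ ω, D ω ∂P) ∧ (¬ ∀ᵐ ω ∂P, (∫ ω, D ω ∂P) < D ω) := by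
  set c := ∫ ω, D ω ∂P with hc
  have hi : ∫ ω, (D ω - c) ∂P = 0 := by
    rw [integral_sub hD (integrable_const c)]
    simp [hc]
  have hint : Integrable (fun ω => D ω - c) P := hD.sub (integrable_const c)
  constructor
  · intro h
    have h0 : 0 ≤ᵐ[P] fun ω => c - D ω := by
      filter_upwards [h] with ω h
      simpa using h
    have := (integral_eq_zero_iff_of_nonneg_ae h0 ((integrable_const c).sub hD)).1 (by
      rw [integral_sub (integrable_const c) hD]
      simp [hc])
    refine hnc c ?_
    filter_upwards [this] with ω h
    simp only [Pi.zero_apply] at h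
    linarith
  · intro h
    have h0 : 0 ≤ᵐ[P] fun ω => D ω - c := by
      filter_upwards [h] with ω h
      simpa using h.le
    have := (integral_eq_zero_iff_of_nonneg_ae h0 hint).1 hi
    refine hnc c ?_
    filter_upwards [this] with ω h
    simp only [Pi.zero_apply] at h
    linarith

/-- The two-valued variable equal to `b` where `D` exceeds its mean and to `a` elsewhere. -/
def twoPoint (P : Measure Ω) (D : Ω → ℝ) (a b : ℝ) : Ω → ℝ :=
  {ω | (∫ ω, D ω ∂P) < D ω}.piecewise (fun _ => b) (fun _ => a)

lemma twoPoint_of_gt {P : Measure Ω} {D : Ω → ℝ} (a b : ℝ) {ω : Ω}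
    (h : (∫ ω, D ω ∂P) < D ω) : twoPoint P D a b ω = b :=
  Set.piecewise_eq_of_mem _ _ _ h

lemma twoPoint_of_le {P : Measure Ω} {D : Ω → ℝ} (a b : ℝ) {ω : Ω}
    (h : D ω ≤ ∫ ω, D ω ∂P) : twoPoint P D a b ω = a :=
  Set.piecewise_eq_of_notMem _ _ _ (not_lt.2 h)

/-- Pointwise gap `(D - c) * (Z - X) ≥ 0` with `c = E[D]` and `Z` the two-point variable,
written in expanded form. -/
lemma twoPoint_gap_nonneg {P : Measure Ω} {D X : Ω → ℝ} {a b : ℝ}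
    (hXab : ∀ᵐ ω ∂P, a ≤ X ω ∧ X ω ≤ b) :
    0 ≤ᵐ[P] fun ω => (D ω * twoPoint P D a b ω - D ω * X ω)
      - (∫ ω, D ω ∂P) * (twoPoint P D a b ω - X ω) := by
  filter_upwards [hXab] with ω h
  rcases lt_or_ge (∫ ω, D ω ∂P) (D ω) with hd | hd
  · simp only [Pi.zero_apply, twoPoint_of_gt a b hd]
    nlinarith [mul_nonneg (sub_nonneg.2 hd.le) (sub_nonneg.2 h.2)]
  · simp only [Pi.zero_apply, twoPoint_of_le a b hd]
    nlinarith [mul_nonneg (sub_nonneg.2 hd) (sub_nonneg.2 h.1)]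

lemma integral_gap {P : Measure Ω} {D X Z : Ω → ℝ} (c : ℝ)
    (hX : Integrable X P) (hDX : Integrable (fun ω => D ω * X ω) P)
    (hZ : Integrable Z P) (hDZ : Integrable (fun ω => D ω * Z ω) P)
    (hp : ∫ ω, D ω * X ω ∂P = ∫ ω, D ω * Z ω ∂P) :
    ∫ ω, ((D ω * Z ω - D ω * X ω) - c * (Z ω - X ω)) ∂P
      = c * (∫ ω, X ω ∂P - ∫ ω, Z ω ∂P) := by
  have h1 : Integrable (fun ω => D ω * Z ω - D ω * X ω) P := hDZ.sub hDX
  have h2 : Integrable (fun ω => c * (Z ω - X ω)) P := (hZ.sub hX).const_mul c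
  rw [integral_sub h1 h2, integral_sub hDZ hDX, integral_const_mul, integral_sub hZ hX, hp]
  ring

/-- Integrating the gap under equal prices gives `E[D] * (E[X] - E[Z]) ≥ 0`. -/
lemma twoPoint_mean_le {P : Measure Ω} [IsProbabilityMeasure P] {D X : Ω → ℝ} {a b : ℝ}
    (hED : 0 < ∫ ω, D ω ∂P)
    (hX : Integrable X P) (hDX : Integrable (fun ω => D ω * X ω) P)
    (hZ : Integrable (twoPoint P D a b) P)
    (hDZ : Integrable (fun ω => D ω * twoPoint P D a b ω) P)
    (hXab : ∀ᵐ ω ∂P, a ≤ X ω ∧ X ω ≤ b)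
    (hp : ∫ ω, D ω * X ω ∂P = ∫ ω, D ω * twoPoint P D a b ω ∂P) :
    ∫ ω, twoPoint P D a b ω ∂P ≤ ∫ ω, X ω ∂P := by
  set c := ∫ ω, D ω ∂P with hc
  set Z := twoPoint P D a b with hZdef
  have h0 : 0 ≤ ∫ ω, ((D ω * Z ω - D ω * X ω) - c * (Z ω - X ω)) ∂P :=
    integral_nonneg_of_ae (twoPoint_gap_nonneg hXab)
  rw [integral_gap c hX hDX hZ hDZ hp] at h0
  exact sub_nonneg.1 (nonneg_of_mul_nonneg_right h0 hED)

/-- Equality case: a variable valued in `[a, b]` with the same price and the same mean as the two-point variable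
agrees with it almost surely. -/
lemma ae_eq_twoPoint {P : Measure Ω} [IsProbabilityMeasure P] {D X : Ω → ℝ} {a b : ℝ}
    (hX : Integrable X P) (hDX : Integrable (fun ω => D ω * X ω) P)
    (hZ : Integrable (twoPoint P D a b) P)
    (hDZ : Integrable (fun ω => D ω * twoPoint P D a b ω) P)
    (hXab : ∀ᵐ ω ∂P, a ≤ X ω ∧ X ω ≤ b)
    (hp : ∫ ω, D ω * X ω ∂P = ∫ ω, D ω * twoPoint P D a b ω ∂P)
    (hm : ∫ ω, X ω ∂P = ∫ ω, twoPoint P D a b ω ∂P) :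
    X =ᵐ[P] twoPoint P D a b := by
  set c := ∫ ω, D ω ∂P with hc
  set Z := twoPoint P D a b with hZdef
  have h0 : 0 ≤ᵐ[P] fun ω => (D ω * Z ω - D ω * X ω) - c * (Z ω - X ω) :=
    twoPoint_gap_nonneg hXab
  have h1 := (integral_eq_zero_iff_of_nonneg_ae h0
    ((hDZ.sub hDX).sub ((hZ.sub hX).const_mul c))).1 (by
      rw [integral_gap c hX hDX hZ hDZ hp, hm, sub_self, mul_zero])
  -- On `{D > c}` the vanishing product pins `X = Z`; elsewhere `X ≥ a = Z`, and the
  -- equality of the means closes the gap.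
  have h2 : 0 ≤ᵐ[P] fun ω => X ω - Z ω := by
    filter_upwards [hXab, h1] with ω h h1
    rcases lt_or_ge c (D ω) with hd | hd
    · have : (D ω - c) * (Z ω - X ω) = 0 := by
        simp only [Pi.zero_apply] at h1
        linarith
      rcases mul_eq_zero.1 this with h' | h'
      · linarith
      · simp only [Pi.zero_apply]
        linarith
    · have : Z ω = a := twoPoint_of_le a b hd
      simp only [Pi.zero_apply, this]
      linarith
  have h3 := (integral_eq_zero_iff_of_nonneg_ae h2 (hX.sub hZ)).1 (by
    rw [integral_sub hX hZ, hm, sub_self])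
  filter_upwards [h3] with ω h
  simp only [Pi.zero_apply] at h
  linarith

/-- With `A = {D ≤ E[D]}`, antimonotonicity at the point `(a, E[D])` would force
`P(A) = max (2 P(A) - 1) 0`, i.e. `P(A) ∈ {0, 1}`. -/
lemma not_antimonotone_of_ae_eq {P : Measure Ω} [IsProbabilityMeasure P] {D X : Ω → ℝ} {a b : ℝ}
    (hab : a < b) (hD : Measurable D) (hDi : Integrable D P) (hnc : Nonconstant P D)
    (hXZ : X =ᵐ[P] twoPoint P D a b) : ¬ Antimonotone P X D := by
  intro h
  obtain ⟨hg, hl⟩ := measure_gt_mean hDi hnc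
  have h := h a (∫ ω, D ω ∂P)
  set c := ∫ ω, D ω ∂P with hc
  have hmeas : MeasurableSet {ω | D ω ≤ c} := measurableSet_le hD measurable_const
  have hae : ∀ᵐ ω ∂P, X ω ≤ a ↔ D ω ≤ c := by
    filter_upwards [hXZ] with ω hω
    rcases lt_or_ge c (D ω) with hd | hd
    · rw [hω, twoPoint_of_gt a b hd]
      exact ⟨fun h => absurd h (not_le.2 hab), fun h => absurd h (not_le.2 hd)⟩
    · rw [hω, twoPoint_of_le a b hd]
      exact ⟨fun _ => hd, fun _ => le_rfl⟩
  have e1 : P {ω | X ω ≤ a} = P {ω | D ω ≤ c} :=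
    measure_congr (by filter_upwards [hae] with ω hω; exact propext hω)
  have e2 : P ({ω | X ω ≤ a} ∩ {ω | D ω ≤ c}) = P {ω | D ω ≤ c} :=
    measure_congr (by
      filter_upwards [hae] with ω hω
      exact propext ⟨fun h => h.2, fun h => ⟨hω.2 h, h⟩⟩)
  rw [e1, e2] at h
  have hne0 : P {ω | D ω ≤ c} ≠ 0 := by
    intro h0
    refine hl ?_
    rw [ae_iff]
    simpa using h0
  have hne1 : P {ω | D ω ≤ c} ≠ 1 := fun h1 => hg ((prob_compl_eq_zero_iff hmeas).2 h1)
  have hlt : P {ω | D ω ≤ c} < 1 := lt_of_le_of_ne prob_le_one hne1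
  have hlt' : P {ω | D ω ≤ c} + P {ω | D ω ≤ c} - 1 < P {ω | D ω ≤ c} := by
    rcases le_total (P {ω | D ω ≤ c} + P {ω | D ω ≤ c}) 1 with h' | h'
    · rw [tsub_eq_zero_of_le h']
      exact pos_iff_ne_zero.2 hne0
    · exact ENNReal.sub_lt_of_lt_add h'
        (ENNReal.add_lt_add_left (measure_ne_top P _) hlt)
  exact hlt'.ne h.symm

/-- for the interval-type domain `C = {X ∈ 𝒳 : a ≤ X ≤ b a.s.}` and any
nonconstant `D` with `E[D] > 0`, there is a law-invariant objective `φ` and a price `p`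
making the quadruple feasible with: `φ` weakly increasing but no optimal solution
antimonotone with `D`; and `φ` increasing with finite optimal value but some optimal
solution not antimonotone with `D`. -/
theorem sharpness_interval_domain
    (P : Measure Ω) [IsProbabilityMeasure P] (hP : IsAtomless P)
    (pr : PairedSpaces P) (a b : ℝ) (hab : a < b)
    (C : Set (Ω → ℝ))
    (hCdef : C = {X | X ∈ pr.carrier ∧ ∀ᵐ ω ∂P, a ≤ X ω ∧ X ω ≤ b})
    (D : Ω → ℝ) (hD : D ∈ pr.dual)
    (hDnc : Nonconstant P D) (hED : 0 < ∫ ω, D ω ∂P) :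
    ∃ φ : (Ω → ℝ) → EReal, ∃ p : ℝ,
      LawInvariantFn P pr.carrier φ ∧
      (∃ X, IsOptimal P φ C D p X) ∧
      WeaklyIncreasingFn pr.carrier φ ∧
      (∀ X, IsOptimal P φ C D p X → ¬ Antimonotone P X D) ∧
      IncreasingFn pr.carrier φ ∧
      (∃ X, IsOptimal P φ C D p X ∧ φ X ≠ (⊤ : EReal) ∧ φ X ≠ (⊥ : EReal)) ∧
      (∃ X, IsOptimal P φ C D p X ∧ ¬ Antimonotone P X D) := by
  subst hCdef
  set Z := twoPoint P D a b with hZdef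
  have hDm := pr.meas_dual D hD
  have hDi := pr.int_dual D hD
  have hZm : Measurable Z := by
    refine Measurable.piecewise ?_ measurable_const measurable_const
    exact measurableSet_lt measurable_const hDm
  have hZab : ∀ ω, a ≤ Z ω ∧ Z ω ≤ b := by
    intro ω
    rcases lt_or_ge (∫ ω, D ω ∂P) (D ω) with hd | hd
    · rw [hZdef, twoPoint_of_gt a b hd]
      exact ⟨hab.le, le_rfl⟩
    · rw [hZdef, twoPoint_of_le a b hd]
      exact ⟨le_rfl, hab.le⟩
  have hZmem : Z ∈ pr.carrier :=
    pr.linf_carrier Z ⟨hZm, max |a| |b|, Filter.Eventually.of_forall fun ω =>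
      abs_le_max_abs_abs (hZab ω).1 (hZab ω).2⟩
  have hmul : ∀ X ∈ pr.carrier, Integrable (fun ω => D ω * X ω) P := fun X hX => by
    simpa only [mul_comm] using pr.mul_int X hX D hD
  obtain ⟨hg, -⟩ := measure_gt_mean hDi hDnc
  have hφZ : objective P b Z = ((-(∫ ω, Z ω ∂P) : ℝ) : EReal) := by
    have h1 : ¬ ∃ ε > (0:ℝ), ∀ᵐ ω ∂P, Z ω ≤ b - ε := by
      rintro ⟨ε, hε, h⟩
      refine hg ?_
      filter_upwards [h] with ω h
      by_contra hd
      rw [hZdef, twoPoint_of_gt a b (not_le.1 hd)] at h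
      linarith
    have h2 : ∀ᵐ ω ∂P, Z ω ≤ b := Filter.Eventually.of_forall fun ω => (hZab ω).2
    simp only [objective, if_neg h1, if_pos h2]
  have hopt : IsOptimal P (objective P b) {X | X ∈ pr.carrier ∧ ∀ᵐ ω ∂P, a ≤ X ω ∧ X ω ≤ b} D
      (∫ ω, D ω * Z ω ∂P) Z := by
    refine ⟨⟨hZmem, Filter.Eventually.of_forall hZab⟩, rfl, ?_⟩
    rintro X ⟨hX, hXab⟩ hp
    have hXb : ∀ᵐ ω ∂P, X ω ≤ b := hXab.mono fun ω h => h.2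
    rw [hφZ]
    by_cases h1 : ∃ ε > (0:ℝ), ∀ᵐ ω ∂P, X ω ≤ b - ε
    · simp only [objective, if_pos h1, bot_le]
    · simp only [objective, if_neg h1, if_pos hXb]
      exact EReal.coe_le_coe_iff.2 (neg_le_neg (twoPoint_mean_le hED (pr.int_carrier X hX)
        (hmul X hX) (pr.int_carrier Z hZmem) (hmul Z hZmem) hXab hp))
  have hnot : ∀ X, IsOptimal P (objective P b)
      {X | X ∈ pr.carrier ∧ ∀ᵐ ω ∂P, a ≤ X ω ∧ X ω ≤ b} D (∫ ω, D ω * Z ω ∂P) X →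
      ¬ Antimonotone P X D := by
    rintro X ⟨⟨hX, hXab⟩, hp, hmax⟩
    have hle := hmax Z hopt.1 rfl
    have hXb : ∀ᵐ ω ∂P, X ω ≤ b := hXab.mono fun ω h => h.2
    have hmean : ∫ ω, X ω ∂P ≤ ∫ ω, Z ω ∂P := by
      rw [hφZ] at hle
      by_cases h1 : ∃ ε > (0:ℝ), ∀ᵐ ω ∂P, X ω ≤ b - ε
      · simp only [objective, if_pos h1] at hle
        exact absurd (le_bot_iff.1 hle) (EReal.coe_ne_bot _)
      · simp only [objective, if_neg h1, if_pos hXb] at hle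
        exact neg_le_neg_iff.1 (EReal.coe_le_coe_iff.1 hle)
    have hge := twoPoint_mean_le hED (pr.int_carrier X hX) (hmul X hX) (pr.int_carrier Z hZmem)
      (hmul Z hZmem) hXab hp
    exact not_antimonotone_of_ae_eq hab hDm hDi hDnc
      (ae_eq_twoPoint (pr.int_carrier X hX) (hmul X hX) (pr.int_carrier Z hZmem)
        (hmul Z hZmem) hXab hp (le_antisymm hmean hge))
  exact ⟨objective P b, ∫ ω, D ω * Z ω ∂P, objective_lawInvariant P pr b, ⟨Z, hopt⟩,
    objective_weaklyIncreasing P _ b, hnot, objective_increasing P _ b,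
    ⟨Z, hopt, hφZ ▸ EReal.coe_ne_top _, hφZ ▸ EReal.coe_ne_bot _⟩, ⟨Z, hopt, hnot Z hopt⟩⟩

end Collapse
end
end
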